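/- Let F be an algebraically closed field of characteristic 2. Then the automorphism group of the algebra E5 with MSC [[1,0,0,-1],[-1,0,0,1]] is Aut(E5) = { [[t,1-t],[1-t,t]] : t ∈ F } (note that in characteristic 2 every such matrix is invertible). -/

import Mathlib

open Matrix Kronecker

variable {F : Type*}

/-- The Kronecker (tensor) product of two `2 × 2` matrices, realized as a `4 × 4` matrix;
rows/columns are indexed in row-major order by the pairs `(1,1), (1,2), (2,1), (2,2)`. -/
def kron [CommRing F] (g h : Matrix (Fin 2) (Fin 2) F) : Matrix (Fin 4) (Fin 4) F :=
  Matrix.reindex finProdFinEquiv finProdFinEquiv (g ⊗ₖ h)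

/-- Two `2`-dimensional algebras given by matrices of structure constants `A, B`
are isomorphic iff `B = g · A · (g⁻¹ ⊗ g⁻¹)` for some `g ∈ GL(2, F)`. -/
def Isomorphic [Field F] (A B : Matrix (Fin 2) (Fin 4) F) : Prop :=
  ∃ g : GL (Fin 2) F,
    B = (g : Matrix (Fin 2) (Fin 2) F) * A *
        kron ((↑(g⁻¹) : Matrix (Fin 2) (Fin 2) F)) ((↑(g⁻¹) : Matrix (Fin 2) (Fin 2) F))

/-- The automorphism group of the algebra with MSC `E`, as a set of (invertible) `2 × 2`
matrices: `Aut(E) = {g ∈ GL(2,F) : g·E = E·(g ⊗ g)}`. -/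
def Aut [Field F] (E : Matrix (Fin 2) (Fin 4) F) : Set (Matrix (Fin 2) (Fin 2) F) :=
  {g | IsUnit g ∧ g * E = E * kron g g}

/-- The derivation algebra of the algebra with MSC `E`:
`Der(E) = { D : E·(D ⊗ I + I ⊗ D) = D·E }`. -/
def Der [Field F] (E : Matrix (Fin 2) (Fin 4) F) : Set (Matrix (Fin 2) (Fin 2) F) :=
  {D | E * (kron D 1 + kron 1 D) = D * E}

/-!
Write `n` for the all-ones vector. In characteristic two the product of the algebra is
`u · v = (u ⬝ v) n`, so an invertible `g` is an automorphism iff it is a similitude of the dot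
product, `gᵀ g = c`, for which `n` is an eigenvector with the same scalar, `g n = c n`. Cancelling
`c` in `c (nᵀ g) = (g n)ᵀ g = nᵀ gᵀ g = c nᵀ` shows that the columns of `g` sum to `1`. Squaring is
additive, so the diagonal entries of `gᵀ g` are the squares of these column sums, whence `c = 1` and
the rows of `g` sum to `1` as well.
-/

section Similitude

theorem one_vecMul_apply_sq {R m n : Type*} [CommSemiring R] [CharP R 2] [Fintype m]
    (A : Matrix m n R) (j : n) : (1 ᵥ* A) j ^ 2 = (Aᵀ * A) j j := by
  simp [vecMul, dotProduct, mul_apply, CharTwo.sum_mul_self, sq]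

variable {R ι : Type*} [Fintype ι] [DecidableEq ι] {g : Matrix ι ι R} {c : R}

theorem isUnit_of_transpose_mul_self_eq_smul_one [CommRing R] [Nonempty ι] (hg : IsUnit g)
    (hc : gᵀ * g = c • 1) : IsUnit c := by
  have hdet : IsUnit (gᵀ * g).det :=
    (isUnit_iff_isUnit_det _).mp ((g.isUnit_transpose.mpr hg).mul hg)
  rwa [hc, det_smul, det_one, mul_one, isUnit_pow_iff Fintype.card_ne_zero] at hdet

variable [CommSemiring R]

theorem vecMul_eq_self_of_mulVec_eq_smul {v : ι → R} (hc : IsUnit c) (hv : g *ᵥ v = c • v)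
    (hg : gᵀ * g = c • 1) : v ᵥ* g = v := by
  refine hc.smul_left_cancel.mp ?_
  calc c • (v ᵥ* g) = (g *ᵥ v) ᵥ* g := by rw [hv, smul_vecMul]
    _ = v ᵥ* (gᵀ * g) := by rw [← vecMul_transpose, vecMul_vecMul]
    _ = c • v := by rw [hg, vecMul_smul, vecMul_one]

theorem eq_one_of_mulVec_one_eq_smul [CharP R 2] [Nonempty ι] (hc : IsUnit c)
    (hn : g *ᵥ 1 = c • 1) (hg : gᵀ * g = c • 1) : c = 1 := by
  obtain ⟨j⟩ := ‹Nonempty ι›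
  have hcol : 1 ᵥ* g = 1 := vecMul_eq_self_of_mulVec_eq_smul hc hn hg
  calc c = (gᵀ * g) j j := by simp [hg]
    _ = (1 ᵥ* g) j ^ 2 := (one_vecMul_apply_sq g j).symm
    _ = 1 := by simp [hcol]

end Similitude

section FinTwo

variable {R : Type*} [CommRing R]

theorem mulVec_one_eq_one_and_one_vecMul_eq_one_iff {g : Matrix (Fin 2) (Fin 2) R} :
    g *ᵥ 1 = 1 ∧ 1 ᵥ* g = 1 ↔ ∃ t : R, g = !![t, 1 - t; 1 - t, t] := by
  constructor
  · rintro ⟨hrow, hcol⟩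
    have hrow₀ : g 0 0 + g 0 1 = 1 := by simpa [mulVec, dotProduct] using congrFun hrow 0
    have hcol₀ : g 0 0 + g 1 0 = 1 := by simpa [vecMul, dotProduct] using congrFun hcol 0
    have hcol₁ : g 0 1 + g 1 1 = 1 := by simpa [vecMul, dotProduct] using congrFun hcol 1
    refine ⟨g 0 0, ?_⟩
    rw [eta_fin_two g, eq_sub_of_add_eq' hrow₀, eq_sub_of_add_eq' hcol₀,
      show g 1 1 = g 0 0 by linear_combination hcol₁ - hrow₀]
    simp
  · rintro ⟨t, rfl⟩
    constructor <;> ext i <;> fin_cases i <;> simp [mulVec, vecMul, dotProduct]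

theorem transpose_mul_self_eq_one_of_charTwo [CharP R 2] (t : R) :
    !![t, 1 - t; 1 - t, t]ᵀ * !![t, 1 - t; 1 - t, t] = 1 := by
  have hdiag : t * t + (1 - t) * (1 - t) = 1 := by
    rw [← CharTwo.add_mul_self, add_sub_cancel, one_mul]
  have hoff : t * (1 - t) + (1 - t) * t = 0 := by
    rw [mul_comm (1 - t), CharTwo.add_self_eq_zero]
  ext i j
  fin_cases i <;> fin_cases j <;> simp [mul_apply, hdiag, hoff, add_comm]

theorem transpose_mul_self_eq_one_and_mulVec_one_eq_one_iff [CharP R 2]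
    {g : Matrix (Fin 2) (Fin 2) R} :
    gᵀ * g = 1 ∧ g *ᵥ 1 = 1 ↔ ∃ t : R, g = !![t, 1 - t; 1 - t, t] := by
  constructor
  · rintro ⟨hg, hn⟩
    exact mulVec_one_eq_one_and_one_vecMul_eq_one_iff.mp
      ⟨hn, vecMul_eq_self_of_mulVec_eq_smul isUnit_one (by rwa [one_smul]) (by rwa [one_smul])⟩
  · rintro ⟨t, rfl⟩
    exact ⟨transpose_mul_self_eq_one_of_charTwo t,
      (mulVec_one_eq_one_and_one_vecMul_eq_one_iff.mpr ⟨t, rfl⟩).1⟩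

end FinTwo

/-- The matrix of structure constants of the algebra on `F²` with product `u · v = (uᵀ B v) n`, for
a vector `n` and the Gram matrix `B` of a bilinear form. The columns are indexed as in `kron`; the
transpose is there because `Matrix.vec` is column-major. -/
def formMSC [CommRing F] (n : Fin 2 → F) (B : Matrix (Fin 2) (Fin 2) F) :
    Matrix (Fin 2) (Fin 4) F :=
  vecMulVec n (vec Bᵀ ∘ (finProdFinEquiv : Fin 2 × Fin 2 ≃ Fin 4).symm)

section FormMSC

variable [CommRing F]

theorem formMSC_apply_finProdFinEquiv (n : Fin 2 → F) (B : Matrix (Fin 2) (Fin 2) F)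
    (i j k : Fin 2) : formMSC n B k (finProdFinEquiv (i, j)) = n k * B i j := by
  simp [formMSC, vecMulVec_apply, vec]

theorem mul_formMSC (g : Matrix (Fin 2) (Fin 2) F) (n : Fin 2 → F)
    (B : Matrix (Fin 2) (Fin 2) F) : g * formMSC n B = formMSC (g *ᵥ n) B :=
  mul_vecMulVec _ _ _

theorem formMSC_mul_kron (n : Fin 2 → F) (B g h : Matrix (Fin 2) (Fin 2) F) :
    formMSC n B * kron g h = formMSC n (gᵀ * B * h) := by
  have hvec : vec Bᵀ ᵥ* (g ⊗ₖ h) = vec (gᵀ * B * h)ᵀ := by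
    rw [vec_vecMul_kronecker, transpose_mul, transpose_mul, transpose_transpose, Matrix.mul_assoc]
  simp [formMSC, kron, vecMulVec_mul, reindex_apply, submatrix_vecMul_equiv, Function.comp_assoc,
    hvec]

theorem formMSC_smul_left (c : F) (n : Fin 2 → F) (B : Matrix (Fin 2) (Fin 2) F) :
    formMSC (c • n) B = formMSC n (c • B) := by
  rw [formMSC, formMSC, smul_vecMulVec, transpose_smul, vec_smul, ← vecMulVec_smul]
  rfl

end FormMSC

section Automorphisms

variable [Field F]

theorem formMSC_eq_formMSC_iff {n n' : Fin 2 → F} {B B' : Matrix (Fin 2) (Fin 2) F}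
    (hn : n ≠ 0) (hB : B ≠ 0) :
    formMSC n' B = formMSC n B' ↔ ∃ c : F, n' = c • n ∧ B' = c • B := by
  constructor
  · intro h
    have hentry (i j k : Fin 2) : n' k * B i j = n k * B' i j := by
      simpa only [formMSC_apply_finProdFinEquiv] using
        congrFun (congrFun h k) (finProdFinEquiv (i, j))
    obtain ⟨i, j, hij⟩ : ∃ i j, B i j ≠ 0 := by
      contrapose! hB
      ext i j
      exact hB i j
    obtain ⟨k, hk⟩ := Function.ne_iff.mp hn
    have hn' : n' = (B' i j / B i j) • n := by
      ext l
      rw [Pi.smul_apply, smul_eq_mul, div_mul_eq_mul_div, eq_div_iff hij, hentry, mul_comm]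
    refine ⟨_, hn', ?_⟩
    ext p q
    refine mul_left_cancel₀ hk ?_
    rw [← hentry, hn', Pi.smul_apply, Matrix.smul_apply, smul_eq_mul, smul_eq_mul]
    ring
  · rintro ⟨c, rfl, rfl⟩
    exact formMSC_smul_left c n B

theorem mem_Aut_formMSC_iff {n : Fin 2 → F} {B g : Matrix (Fin 2) (Fin 2) F}
    (hn : n ≠ 0) (hB : B ≠ 0) :
    g ∈ Aut (formMSC n B) ↔ IsUnit g ∧ ∃ c : F, g *ᵥ n = c • n ∧ gᵀ * B * g = c • B := by
  rw [Aut, Set.mem_ofPred_eq, mul_formMSC, formMSC_mul_kron, formMSC_eq_formMSC_iff hn hB]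

theorem mem_Aut_formMSC_one_one_iff [CharP F 2] {g : Matrix (Fin 2) (Fin 2) F} :
    g ∈ Aut (formMSC 1 1) ↔ gᵀ * g = 1 ∧ g *ᵥ 1 = 1 := by
  rw [mem_Aut_formMSC_iff one_ne_zero one_ne_zero, Matrix.mul_one]
  constructor
  · rintro ⟨hunit, c, hn, hg⟩
    have hc : IsUnit c := isUnit_of_transpose_mul_self_eq_smul_one hunit hg
    obtain rfl : c = 1 := eq_one_of_mulVec_one_eq_smul hc hn hg
    exact ⟨by rw [hg, one_smul], by rw [hn, one_smul]⟩
  · rintro ⟨hg, hn⟩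
    exact ⟨IsUnit.of_mul_eq_one_right _ hg, 1, by rw [hn, one_smul], by rw [hg, one_smul]⟩

end Automorphisms

theorem E5_eq_formMSC_one_one [CommRing F] [CharP F 2] :
    (!![1, 0, 0, -1; -1, 0, 0, 1] : Matrix (Fin 2) (Fin 4) F) = formMSC 1 1 := by
  ext k l
  obtain ⟨⟨i, j⟩, rfl⟩ := (finProdFinEquiv : Fin 2 × Fin 2 ≃ Fin 4).surjective l
  rw [formMSC_apply_finProdFinEquiv]
  fin_cases i <;> fin_cases j <;> fin_cases k <;> simp [finProdFinEquiv, CharTwo.neg_eq]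

theorem aut_E5_char_two_general (F : Type*) [Field F] [CharP F 2] :
    Aut (!![1, 0, 0, -1; -1, 0, 0, 1] : Matrix (Fin 2) (Fin 4) F) =
      {g | ∃ t : F, g = !![t, 1 - t; 1 - t, t]} := by
  ext g
  rw [E5_eq_formMSC_one_one, mem_Aut_formMSC_one_one_iff,
    transpose_mul_self_eq_one_and_mulVec_one_eq_one_iff, Set.mem_ofPred_eq]

theorem aut_E5_char_two (F : Type*) [Field F] [IsAlgClosed F] [CharP F 2] :
    Aut (!![1, 0, 0, -1; -1, 0, 0, 1] : Matrix (Fin 2) (Fin 4) F) =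
      {g | ∃ t : F, g = !![t, 1 - t; 1 - t, t]} :=
  aut_E5_char_two_general F
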